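/- Let t > 2 and let k be an integer with t/2 < k < t and gcd(k,t) = 1 (so k ≥ 2). Then for every 1 ≤ r ≤ t with r ≠ k, D_k^×(r,t;n) > D_k^×(k,t;n) for all sufficiently large n; that is, k mod t is the least common residue class among parts of k-indivisible partitions of n. -/

import Mathlib

open scoped Real

/-- `Dkx k t r n` is the number of parts congruent to `r` mod `t`, counted with
multiplicity, among all partitions of `n` into parts not divisible by `k`. -/
noncomputable def Dkx (k t r n : ℕ) : ℕ :=
  ∑ p : n.Partition,
    if ∀ i ∈ p.parts, ¬ k ∣ i then (p.parts.filter (fun i => i % t = r % t)).card else 0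

/-!
Write `P` for the number of `k`-indivisible partitions. Counting the copies of each part `m` by
removing them gives `D(r; n) = ∑ P(n - m i)` over `i ≥ 1` and admissible `m ≡ r mod t`. Since a
part `1` can always be added, `P` is nondecreasing, so `P` has increments `Δ ≥ 0`, and Abel
summation turns this into `D(r; n) = ∑_l Δ(l) A_r(n - l)` with
`A_r(x) = ∑_{m ≡ r, k ∤ m} ⌊x / m⌋` (`Dkx_eq`).

The theorem then follows from two facts.

* `divSum_gap`: `A_r(x) - A_k(x) ≥ δ x - M` for some `δ > 0`. If `k r' ≡ r mod t` with
  `1 ≤ r' ≤ t`, the multiples of `k` in the class of `r` are the `k (n t + r')`, and those in the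
  class of `k` are the `k (n t + 1)`. Hence, up to bounded error, the difference is `x` times
  `∑ (1/(nt+r) - 1/(nt+k)) + (1/k) ∑ (1/(nt+1) - 1/(nt+r'))`. The second series has nonnegative
  terms, and for `r < k` so does the first. For `r > k` the first series is bounded by
  telescoping (`sum_inv_sub_le`) and is outweighed by the term `n = 0` of the second
  (`margin_pos`); this is where `k > t / 2` enters.
* `mul_numIndiv_le`: `P(n) = o(∑_{j<n} P(j))`. Removing one part from each partition of `n` in all
  possible ways shows that `∑_{j<n} P(j)` is at least the total number of distinct part sizes in
  the partitions of `n`; those with a bounded number of part sizes are polynomially few, while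
  `∑_{j<n} P(j)` grows faster than any polynomial.

Indeed `∑_l Δ(l) (n - l) = ∑_{j<n} P(j)`, so that
`D(r; n) - D(k; n) ≥ δ ∑_{j<n} P(j) - M P(n)`, which is positive for large `n`.
-/

/-! ### Counting parts through the partition function -/

/-- The `k`-indivisible partitions of `n`, encoded as multisets of parts. -/
noncomputable def indiv (k n : ℕ) : Finset (Multiset ℕ) :=
  (Finset.univ.image (fun p : n.Partition => p.parts)).filter (fun s => ∀ i ∈ s, ¬ k ∣ i)

/-- Positivity of the parts is automatic, since `k ∣ 0`. -/
lemma mem_indiv {k n : ℕ} {s : Multiset ℕ} :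
    s ∈ indiv k n ↔ s.sum = n ∧ ∀ i ∈ s, ¬ k ∣ i := by
  unfold indiv
  simp only [Finset.mem_filter, Finset.mem_image, Finset.mem_univ, true_and]
  constructor
  · rintro ⟨⟨p, rfl⟩, h⟩
    exact ⟨p.parts_sum, h⟩
  · rintro ⟨hs, h⟩
    refine ⟨⟨⟨s, fun {i} hi => ?_, hs⟩, rfl⟩, h⟩
    rcases Nat.eq_zero_or_pos i with rfl | h0
    · exact absurd (dvd_zero k) (h _ hi)
    · exact h0

/-- The number of `k`-indivisible partitions of `n`. -/
noncomputable def numIndiv (k n : ℕ) : ℕ := (indiv k n).card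

lemma Dkx_eq_sum_indiv (k t r n : ℕ) :
    Dkx k t r n = ∑ s ∈ indiv k n, (s.filter (fun i => i % t = r % t)).card := by
  unfold Dkx indiv
  rw [Finset.sum_filter, Finset.sum_image]
  intro p _ q _ h
  exact Nat.Partition.ext h

lemma numIndiv_le_succ {k : ℕ} (hk : 2 ≤ k) (n : ℕ) : numIndiv k n ≤ numIndiv k (n + 1) := by
  refine Finset.card_le_card_of_injOn (fun s => 1 ::ₘ s) ?_ ?_
  · intro s hs
    have hs' := mem_indiv.1 (Finset.mem_coe.1 hs)
    refine Finset.mem_coe.2 (mem_indiv.2 ⟨by simp [hs'.1, add_comm], ?_⟩)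
    intro i hi
    rcases Multiset.mem_cons.1 hi with rfl | hi
    · intro h
      have := Nat.le_of_dvd one_pos h
      omega
    · exact hs'.2 i hi
  · intro a _ b _ h
    simpa using h

/-- Removing `i` copies of `m` is a bijection from the partitions containing `m` at least `i`
times onto the partitions of `n - m * i`. -/
lemma card_filter_count {k m n i : ℕ} (hm : ¬ k ∣ m) :
    ((indiv k n).filter (fun s => i ≤ s.count m)).card =
      if m * i ≤ n then numIndiv k (n - m * i) else 0 := by
  split_ifs with h
  · refine Finset.card_nbij' (fun s => s - Multiset.replicate i m)
      (fun s => s + Multiset.replicate i m) ?_ ?_ ?_ ?_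
    · intro s hs
      obtain ⟨hs, hc⟩ := Finset.mem_filter.1 (Finset.mem_coe.1 hs)
      obtain ⟨hsum, hd⟩ := mem_indiv.1 hs
      have hle : Multiset.replicate i m ≤ s := Multiset.le_count_iff_replicate_le.1 hc
      refine Finset.mem_coe.2 (mem_indiv.2 ⟨?_, fun j hj =>
        hd j (Multiset.mem_of_le (Multiset.sub_le_self _ _) hj)⟩)
      have h2 := congrArg Multiset.sum (tsub_add_cancel_of_le hle)
      rw [Multiset.sum_add, Multiset.sum_replicate, smul_eq_mul, hsum, mul_comm] at h2
      show (s - Multiset.replicate i m).sum = _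
      omega
    · intro s hs
      obtain ⟨hsum, hd⟩ := mem_indiv.1 (Finset.mem_coe.1 hs)
      refine Finset.mem_coe.2 (Finset.mem_filter.2 ⟨mem_indiv.2 ⟨?_, ?_⟩, ?_⟩)
      · rw [Multiset.sum_add, Multiset.sum_replicate, smul_eq_mul, hsum, mul_comm i m]
        omega
      · intro j hj
        rcases Multiset.mem_add.1 hj with hj | hj
        · exact hd j hj
        · rw [Multiset.eq_of_mem_replicate hj]; exact hm
      · simp
    · intro s hs
      obtain ⟨hs, hc⟩ := Finset.mem_filter.1 (Finset.mem_coe.1 hs)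
      exact tsub_add_cancel_of_le (Multiset.le_count_iff_replicate_le.1 hc)
    · intro s hs
      simp
  · rw [Finset.card_eq_zero, Finset.filter_eq_empty_iff]
    intro s hs hc
    obtain ⟨hsum, hd⟩ := mem_indiv.1 hs
    have hle : Multiset.replicate i m ≤ s := Multiset.le_count_iff_replicate_le.1 hc
    have h2 := congrArg Multiset.sum (tsub_add_cancel_of_le hle)
    rw [Multiset.sum_add, Multiset.sum_replicate, smul_eq_mul, hsum, mul_comm] at h2
    omega

lemma count_le_of_mem_indiv {k m n : ℕ} {s : Multiset ℕ} (hm : ¬ k ∣ m) (hs : s ∈ indiv k n) :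
    s.count m ≤ n := by
  have hm0 : 0 < m := Nat.pos_of_ne_zero (by rintro rfl; exact hm (dvd_zero k))
  by_contra hlt
  have h : s ∈ (indiv k n).filter (fun s => n + 1 ≤ s.count m) :=
    Finset.mem_filter.2 ⟨hs, by omega⟩
  have hc := card_filter_count (n := n) (i := n + 1) hm
  rw [if_neg (by nlinarith), Finset.card_eq_zero] at hc
  rw [hc] at h
  exact Finset.notMem_empty _ h

lemma sum_count {k m n : ℕ} (hm : ¬ k ∣ m) :
    ∑ s ∈ indiv k n, s.count m =
      ∑ i ∈ Finset.Icc 1 n, if m * i ≤ n then numIndiv k (n - m * i) else 0 := by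
  simp_rw [← card_filter_count hm, Finset.card_filter]
  rw [Finset.sum_comm]
  refine Finset.sum_congr rfl fun s hs => ?_
  rw [← Finset.card_filter]
  have hle := count_le_of_mem_indiv hm hs
  have : (Finset.Icc 1 n).filter (fun i => i ≤ s.count m) = Finset.Icc 1 (s.count m) := by
    ext i; simp only [Finset.mem_filter, Finset.mem_Icc]; omega
  rw [this, Nat.card_Icc]
  omega

/-- The increment of `numIndiv k`; for `k ≥ 2` it counts the `k`-indivisible partitions without
parts equal to `1`, so the truncated subtraction loses nothing. -/
noncomputable def incr (k : ℕ) : ℕ → ℕ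
  | 0 => numIndiv k 0
  | n + 1 => numIndiv k (n + 1) - numIndiv k n

lemma sum_incr {k : ℕ} (hk : 2 ≤ k) (n : ℕ) :
    ∑ l ∈ Finset.range (n + 1), incr k l = numIndiv k n := by
  induction n with
  | zero => simp [incr]
  | succ n ih =>
    rw [Finset.sum_range_succ, ih, incr]
    have := numIndiv_le_succ hk n
    omega

lemma sum_incr_mul_sub {k : ℕ} (hk : 2 ≤ k) (n : ℕ) :
    ∑ l ∈ Finset.range (n + 1), incr k l * (n - l) = ∑ j ∈ Finset.range n, numIndiv k j := by
  induction n with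
  | zero => simp
  | succ n ih =>
    rw [Finset.sum_range_succ (fun l => incr k l * (n + 1 - l)) (n + 1),
      Finset.sum_range_succ (fun j => numIndiv k j) n, ← ih, ← sum_incr hk n,
      ← Finset.sum_add_distrib, Nat.sub_self, mul_zero, add_zero]
    refine Finset.sum_congr rfl fun l hl => ?_
    have hl := Finset.mem_range.1 hl
    rw [show n + 1 - l = (n - l) + 1 by omega]
    ring

lemma sum_count_eq_incr {k : ℕ} (hk : 2 ≤ k) {m n : ℕ} (hm : ¬ k ∣ m) :
    ∑ s ∈ indiv k n, s.count m = ∑ l ∈ Finset.range (n + 1), incr k l * ((n - l) / m) := by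
  have hm0 : 0 < m := Nat.pos_of_ne_zero (by rintro rfl; exact hm (dvd_zero k))
  rw [sum_count hm]
  have h1 : ∀ i ∈ Finset.Icc 1 n, (if m * i ≤ n then numIndiv k (n - m * i) else 0) =
      ∑ l ∈ Finset.range (n + 1), if m * i + l ≤ n then incr k l else 0 := by
    intro i _
    rw [← Finset.sum_filter]
    split_ifs with h
    · rw [← sum_incr hk]
      refine Finset.sum_congr ?_ fun _ _ => rfl
      ext l; simp only [Finset.mem_filter, Finset.mem_range]; omega
    · rw [Finset.filter_eq_empty_iff.2, Finset.sum_empty]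
      intro l _; omega
  rw [Finset.sum_congr rfl h1, Finset.sum_comm]
  refine Finset.sum_congr rfl fun l hl => ?_
  rw [← Finset.sum_filter, Finset.sum_const, smul_eq_mul, mul_comm]
  congr 1
  have hl := Finset.mem_range.1 hl
  have : (Finset.Icc 1 n).filter (fun i => m * i + l ≤ n) = Finset.Icc 1 ((n - l) / m) := by
    ext i
    simp only [Finset.mem_filter, Finset.mem_Icc, Nat.le_div_iff_mul_le hm0]
    constructor
    · rintro ⟨⟨h1, h2⟩, h3⟩
      exact ⟨h1, by rw [mul_comm]; omega⟩
    · rintro ⟨h1, h2⟩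
      rw [mul_comm] at h2
      have : i ≤ m * i := Nat.le_mul_of_pos_left _ hm0
      exact ⟨⟨h1, by omega⟩, by omega⟩
  rw [this, Nat.card_Icc, Nat.add_sub_cancel]

/-- The summatory function `∑_{j ≤ x} #{d ∣ j : d ≡ r mod t, k ∤ d}`, written as
`∑ ⌊x / m⌋` over admissible `m < R`; it does not depend on `R > x`. -/
def divSum (k t r R x : ℕ) : ℕ :=
  ∑ m ∈ (Finset.range R).filter (fun m => m % t = r % t ∧ ¬ k ∣ m), x / m

lemma divSum_eq {k t r R x : ℕ} (h : x < R) : divSum k t r R x = divSum k t r (x + 1) x := by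
  unfold divSum
  symm
  apply Finset.sum_subset
  · intro m
    simp only [Finset.mem_filter, Finset.mem_range]
    rintro ⟨h1, h2⟩
    exact ⟨by omega, h2⟩
  · intro m hm hm'
    simp only [Finset.mem_filter, Finset.mem_range] at hm hm'
    exact Nat.div_eq_of_lt (by by_contra hc; exact hm' ⟨by omega, hm.2⟩)

/-- Abel summation: the count of parts is the convolution of the increments of the partition
function with the summatory divisor function. -/
lemma Dkx_eq {k : ℕ} (hk : 2 ≤ k) (t r n : ℕ) :
    Dkx k t r n =
      ∑ l ∈ Finset.range (n + 1), incr k l * divSum k t r (n - l + 1) (n - l) := by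
  have h1 : ∀ s ∈ indiv k n, (s.filter (fun i => i % t = r % t)).card =
      ∑ m ∈ (Finset.range (n + 1)).filter (fun m => m % t = r % t ∧ ¬ k ∣ m), s.count m := by
    intro s hs
    obtain ⟨hsum, hd⟩ := mem_indiv.1 hs
    rw [← Multiset.sum_count_eq_card (s := (Finset.range (n + 1)).filter
      (fun m => m % t = r % t ∧ ¬ k ∣ m))]
    · refine Finset.sum_congr rfl fun m hm => ?_
      exact Multiset.count_filter_of_pos (Finset.mem_filter.1 hm).2.1
    · intro a ha
      obtain ⟨ha, hat⟩ := Multiset.mem_filter.1 ha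
      have := Multiset.le_sum_of_mem ha
      exact Finset.mem_filter.2 ⟨Finset.mem_range.2 (by omega), hat, hd a ha⟩
  rw [Dkx_eq_sum_indiv, Finset.sum_congr rfl h1]
  have h2 : ∀ l ∈ Finset.range (n + 1), incr k l * divSum k t r (n - l + 1) (n - l) =
      ∑ m ∈ (Finset.range (n + 1)).filter (fun m => m % t = r % t ∧ ¬ k ∣ m),
        incr k l * ((n - l) / m) := by
    intro l _
    rw [← divSum_eq (show n - l < n + 1 by omega), divSum, Finset.mul_sum]
  rw [Finset.sum_congr rfl h2, Finset.sum_comm,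
    Finset.sum_comm (s := Finset.range (n + 1)) (t := Finset.filter _ _)]
  exact Finset.sum_congr rfl fun m hm => sum_count_eq_incr hk (Finset.mem_filter.1 hm).2.2

/-! ### Subexponential growth of the partition function -/

/-- Removing one copy of a part size is injective on pairs (partition, size), because the size
can be read off from the sum of what remains. -/
lemma sum_card_toFinset_le {k n : ℕ} :
    ∑ s ∈ indiv k n, s.toFinset.card ≤ ∑ j ∈ Finset.range n, numIndiv k j := by
  unfold numIndiv
  rw [← Finset.card_sigma, ← Finset.card_sigma]
  refine Finset.card_le_card_of_injOn (fun x => ⟨n - x.2, x.1.erase x.2⟩) ?_ ?_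
  · rintro ⟨s, i⟩ hx
    obtain ⟨hs, hi⟩ := Finset.mem_sigma.1 (Finset.mem_coe.1 hx)
    obtain ⟨hsum, hd⟩ := mem_indiv.1 hs
    have hi : i ∈ s := Multiset.mem_toFinset.1 hi
    have hi0 : i ≠ 0 := by rintro rfl; exact hd 0 hi (dvd_zero k)
    have h2 := Multiset.sum_erase hi
    have hsum' : s.sum = n := hsum
    refine Finset.mem_coe.2 (Finset.mem_sigma.2 ⟨Finset.mem_range.2 ?_, mem_indiv.2 ⟨?_, ?_⟩⟩)
    · show n - i < n
      omega
    · show (s.erase i).sum = n - i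
      omega
    · intro j hj
      exact hd j (Multiset.mem_of_mem_erase hj)
  · rintro ⟨s, i⟩ hx ⟨s', i'⟩ hx' h
    obtain ⟨hs, hi⟩ := Finset.mem_sigma.1 (Finset.mem_coe.1 hx)
    obtain ⟨hs', hi'⟩ := Finset.mem_sigma.1 (Finset.mem_coe.1 hx')
    have hi : i ∈ s := Multiset.mem_toFinset.1 hi
    have hi' : i' ∈ s' := Multiset.mem_toFinset.1 hi'
    have h1 : n - i = n - i' := congrArg Sigma.fst h
    have h2 : s.erase i = s'.erase i' := by
      simp only [Sigma.mk.injEq] at h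
      exact eq_of_heq h.2
    have e1 : s.sum = n := (mem_indiv.1 hs).1
    have e2 : s'.sum = n := (mem_indiv.1 hs').1
    have l1 := Multiset.le_sum_of_mem hi
    have l2 := Multiset.le_sum_of_mem hi'
    have hii : i = i' := by omega
    subst hii
    have : s = s' := by rw [← Multiset.cons_erase hi, h2, Multiset.cons_erase hi']
    rw [this]

/-- Partitions with fewer than `d` part sizes are polynomially few: such a partition is
determined by the set of its pairs (size, multiplicity). -/
lemma card_few_le {k n d : ℕ} :
    ((indiv k n).filter (fun s => s.toFinset.card < d)).card ≤ d * (n + 1) ^ (2 * d) := by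
  set G := Finset.range (n + 1) ×ˢ Finset.range (n + 1) with hG
  have hGc : G.card = (n + 1) ^ 2 := by simp [hG, sq]
  have hcard : ((Finset.range d).biUnion (fun i => G.powersetCard i)).card ≤
      d * (n + 1) ^ (2 * d) := by
    refine (Finset.card_biUnion_le).trans ?_
    calc ∑ i ∈ Finset.range d, (G.powersetCard i).card
        ≤ ∑ i ∈ Finset.range d, (n + 1) ^ (2 * d) := by
          refine Finset.sum_le_sum fun i hi => ?_
          rw [Finset.card_powersetCard, hGc, pow_mul]
          refine (Nat.choose_le_pow _ _).trans ?_
          exact Nat.pow_le_pow_right (by positivity) (Finset.mem_range.1 hi).le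
      _ = _ := by simp
  refine le_trans ?_ hcard
  refine Finset.card_le_card_of_injOn
    (fun s => s.toFinset.image (fun i => (i, s.count i))) ?_ ?_
  · intro s hs
    obtain ⟨hs, hc⟩ := Finset.mem_filter.1 (Finset.mem_coe.1 hs)
    obtain ⟨hsum, hd⟩ := mem_indiv.1 hs
    refine Finset.mem_coe.2 (Finset.mem_biUnion.2 ⟨s.toFinset.card, Finset.mem_range.2 hc,
      Finset.mem_powersetCard.2 ⟨?_, ?_⟩⟩)
    · intro x hx
      obtain ⟨i, hi, rfl⟩ := Finset.mem_image.1 hx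
      have hi := Multiset.mem_toFinset.1 hi
      have h1 := Multiset.le_sum_of_mem hi
      have h2 := count_le_of_mem_indiv (hd i hi) hs
      rw [hG, Finset.mem_product]
      exact ⟨Finset.mem_range.2 (by show i < _; omega), Finset.mem_range.2 (by show s.count i < _; omega)⟩
    · refine Finset.card_image_of_injective _ fun a b h => (Prod.mk.inj h).1
  · intro s _ s' _ h
    have key : ∀ u v : Multiset ℕ, u.toFinset.image (fun i => (i, u.count i)) =
        v.toFinset.image (fun i => (i, v.count i)) → ∀ i ∈ u, u.count i = v.count i := by
      intro u v huv i hi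
      have : (i, u.count i) ∈ v.toFinset.image (fun i => (i, v.count i)) := by
        rw [← huv]
        exact Finset.mem_image.2 ⟨i, Multiset.mem_toFinset.2 hi, rfl⟩
      obtain ⟨j, _, hj⟩ := Finset.mem_image.1 this
      obtain ⟨h1, h2⟩ := Prod.mk.inj hj
      subst h1
      exact h2.symm
    ext i
    by_cases h1 : i ∈ s
    · exact key s s' h i h1
    · by_cases h2 : i ∈ s'
      · exact (key s' s h.symm i h2).symm
      · rw [Multiset.count_eq_zero_of_notMem h1, Multiset.count_eq_zero_of_notMem h2]

/-- The `2 ^ L` sets of parts drawn from `{i k + 1 : i < L}` all have sum less than `n`. -/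
lemma two_pow_le_sum {k L n : ℕ} (hk : 2 ≤ k) (h : L * (L * k + 1) < n) :
    2 ^ L ≤ ∑ j ∈ Finset.range n, numIndiv k j := by
  unfold numIndiv
  rw [← Finset.card_sigma]
  rw [show 2 ^ L = ((Finset.range L).powerset).card by simp]
  have hinj : Function.Injective (fun i : ℕ => i * k + 1) := by
    intro a b hab
    have : a * k = b * k := by simpa using hab
    exact Nat.eq_of_mul_eq_mul_right (by omega) this
  refine Finset.card_le_card_of_injOn
    (fun T => ⟨(T.val.map (fun i => i * k + 1)).sum, T.val.map (fun i => i * k + 1)⟩) ?_ ?_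
  · intro T hT
    have hT := Finset.mem_powerset.1 (Finset.mem_coe.1 hT)
    refine Finset.mem_coe.2 (Finset.mem_sigma.2 ⟨Finset.mem_range.2 ?_, mem_indiv.2 ⟨rfl, ?_⟩⟩)
    · show ∑ i ∈ T, (i * k + 1) < n
      refine lt_of_le_of_lt ?_ h
      calc ∑ i ∈ T, (i * k + 1) ≤ ∑ i ∈ Finset.range L, (i * k + 1) :=
            Finset.sum_le_sum_of_subset hT
        _ ≤ ∑ i ∈ Finset.range L, (L * k + 1) := by
            refine Finset.sum_le_sum fun i hi => ?_
            have := (Finset.mem_range.1 hi).le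
            gcongr
        _ = _ := by simp
    · intro j hj hdvd
      obtain ⟨i, _, rfl⟩ := Multiset.mem_map.1 hj
      have : k ∣ 1 := (Nat.dvd_add_right (Dvd.intro_left i rfl)).1 hdvd
      have := Nat.le_of_dvd one_pos this
      omega
  · intro T _ T' _ hTT
    have h2 : T.val.map (fun i => i * k + 1) = T'.val.map (fun i => i * k + 1) := by
      simp only [Sigma.mk.injEq] at hTT
      exact eq_of_heq hTT.2
    exact Finset.val_injective (Multiset.map_injective hinj h2)

lemma poly_le_sum {k : ℕ} (hk : 2 ≤ k) (C e : ℕ) :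
    ∃ N : ℕ, ∀ n ≥ N, C * (n + 1) ^ e ≤ ∑ j ∈ Finset.range n, numIndiv k j := by
  have ht := tendsto_pow_const_div_const_pow_of_one_lt (2 * e) (show (1 : ℝ) < 2 by norm_num)
  have hpos : (0 : ℝ) < 1 / (2 * (C + 1) * (k + 2) ^ e) := by positivity
  obtain ⟨L₀, hL₀⟩ := Filter.eventually_atTop.1 (ht.eventually (gt_mem_nhds hpos))
  refine ⟨(k + 2) * (L₀ + 1) ^ 2, fun n hn => ?_⟩
  set L := Nat.sqrt (n / (k + 2)) with hL
  have h1 : L * L ≤ n / (k + 2) := Nat.sqrt_le _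
  have h2 : n / (k + 2) < (L + 1) * (L + 1) := Nat.lt_succ_sqrt _
  have h3 : L * L * (k + 2) ≤ n := (Nat.le_div_iff_mul_le (by omega)).1 h1
  have h4 : n < (L + 1) * (L + 1) * (k + 2) := (Nat.div_lt_iff_lt_mul (by omega)).1 h2
  have h5 : L₀ + 1 ≤ L := by
    rw [hL, Nat.le_sqrt, Nat.le_div_iff_mul_le (by omega)]
    nlinarith
  refine le_trans ?_ (two_pow_le_sum (L := L) hk (by nlinarith))
  have h6 := hL₀ (L + 1) (by omega)
  rw [div_lt_div_iff₀ (by positivity) (by positivity), one_mul] at h6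
  have h7 : C * (n + 1) ^ e ≤ (C + 1) * ((k + 2) ^ e * (L + 1) ^ (2 * e)) := by
    rw [pow_mul, ← mul_pow]
    gcongr
    · omega
    · nlinarith
  have h8 : (C + 1) * ((k + 2) ^ e * (L + 1) ^ (2 * e)) * 2 ≤ 2 ^ L * 2 := by
    rw [← pow_succ]
    have : (((C + 1) * ((k + 2) ^ e * (L + 1) ^ (2 * e)) * 2 : ℕ) : ℝ) ≤ ((2 ^ (L + 1) : ℕ) : ℝ) := by
      push_cast at h6 ⊢
      linarith
    exact_mod_cast this
  omega

/-- Subexponential growth: a single value of the partition function is negligible against the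
sum of the earlier ones, since most partitions have many different part sizes. -/
lemma mul_numIndiv_le {k : ℕ} (hk : 2 ≤ k) (d : ℕ) :
    ∃ N : ℕ, ∀ n ≥ N, 0 < ∑ j ∈ Finset.range n, numIndiv k j ∧
      d * numIndiv k n ≤ 2 * ∑ j ∈ Finset.range n, numIndiv k j := by
  obtain ⟨N, hN⟩ := poly_le_sum hk (d * d + 1) (2 * d)
  refine ⟨N, fun n hn => ?_⟩
  have h1 := hN n hn
  have h2 : d * numIndiv k n ≤ ∑ s ∈ indiv k n, s.toFinset.card +
      d * ((indiv k n).filter (fun s => s.toFinset.card < d)).card := by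
    rw [numIndiv, Finset.card_filter, Finset.mul_sum, ← Finset.sum_add_distrib, mul_comm,
      ← smul_eq_mul, ← Finset.sum_const]
    refine Finset.sum_le_sum fun s _ => ?_
    split_ifs with h <;> omega
  have h3 := sum_card_toFinset_le (k := k) (n := n)
  have h4 := Nat.mul_le_mul_left d (card_few_le (k := k) (n := n) (d := d))
  have h5 : 0 < (n + 1) ^ (2 * d) := by positivity
  refine ⟨by nlinarith, by nlinarith⟩

/-! ### The summatory divisor function in residue classes -/

lemma sum_progression {b a R X : ℕ} {p : ℕ → Prop} [DecidablePred p] {x : ℕ} (hb : 0 < b)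
    (hp : ∀ m, p m ↔ ∃ n, m = n * b + a) (hX : x < X) (hR : X * b + a < R) :
    ∑ m ∈ (Finset.range R).filter p, x / m = ∑ n ∈ Finset.range X, x / (n * b + a) := by
  symm
  refine Finset.sum_of_injOn (fun n => n * b + a) ?_ ?_ ?_ ?_
  · intro n _ n' _ h
    have h : n * b + a = n' * b + a := h
    exact Nat.eq_of_mul_eq_mul_right hb (by omega)
  · intro n hn
    have hn := Finset.mem_range.1 (Finset.mem_coe.1 hn)
    refine Finset.mem_coe.2 (Finset.mem_filter.2 ⟨Finset.mem_range.2 ?_, (hp _).2 ⟨n, rfl⟩⟩)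
    show n * b + a < R
    nlinarith
  · intro m hm hm'
    obtain ⟨n, rfl⟩ := (hp m).1 (Finset.mem_filter.1 hm).2
    apply Nat.div_eq_of_lt
    by_contra hc
    refine hm' ⟨n, Finset.mem_coe.2 (Finset.mem_range.2 ?_), rfl⟩
    nlinarith
  · intro n _
    rfl

lemma mod_eq_iff {t r m : ℕ} (h2 : r ≤ t) (hm : 0 < m) :
    m % t = r % t ↔ ∃ n, m = n * t + r := by
  constructor
  · intro h
    rcases h2.lt_or_eq with h2 | rfl
    · rw [Nat.mod_eq_of_lt h2] at h
      exact ⟨m / t, by rw [← h, mul_comm]; exact (Nat.div_add_mod m t).symm⟩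
    · rw [Nat.mod_self] at h
      obtain ⟨c, rfl⟩ := Nat.dvd_of_mod_eq_zero h
      obtain ⟨c, rfl⟩ : ∃ d, c = d + 1 := ⟨c - 1, by
        have : c ≠ 0 := by rintro rfl; simp at hm
        omega⟩
      exact ⟨c, by ring⟩
  · rintro ⟨n, rfl⟩
    rw [Nat.mul_add_mod_self_right]

open Classical in
/-- The multiples of `k` congruent to `r` are `k (n t + r')` with `k r' ≡ r`; removing them from
the full progression leaves the terms of `divSum`. -/
lemma divSum_add {k t r r' x : ℕ} (hk : 0 < k) (hcop : Nat.Coprime k t) (h1 : 1 ≤ r)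
    (h2 : r ≤ t) (h1' : 1 ≤ r') (h2' : r' ≤ t) (hrr : k * r' ≡ r [MOD t]) :
    divSum k t r (x + 1) x + ∑ n ∈ Finset.range (x + 1), x / (k * (n * t + r')) =
      ∑ n ∈ Finset.range (x + 1), x / (n * t + r) := by
  have ht : 0 < t := by omega
  set R := (x + 1) * (k * t) + (x + 1) * t + k * r' + r + x + 1 with hR
  have e1 : ∑ m ∈ (Finset.range R).filter (fun m => ∃ n, m = n * t + r), x / m =
      ∑ n ∈ Finset.range (x + 1), x / (n * t + r) :=
    sum_progression ht (fun m => Iff.rfl) (by omega) (by omega)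
  have e2 : ∑ m ∈ (Finset.range R).filter (fun m => ∃ n, m = n * (k * t) + k * r'), x / m =
      ∑ n ∈ Finset.range (x + 1), x / (k * (n * t + r')) := by
    rw [sum_progression (a := k * r') (b := k * t) (X := x + 1) (by positivity)
      (fun m => Iff.rfl) (by omega) (by omega)]
    refine Finset.sum_congr rfl fun n _ => ?_
    congr 1; ring
  have e3 : (Finset.range R).filter (fun m => m % t = r % t ∧ ¬ k ∣ m) =
      ((Finset.range R).filter (fun m => ∃ n, m = n * t + r)).filter (fun m => ¬ k ∣ m) := by
    rw [Finset.filter_filter]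
    refine Finset.filter_congr fun m _ => and_congr_left fun hkm => ?_
    -- `m = 0` would be a spurious solution of `m ≡ t mod t`, but it is divisible by `k`
    exact mod_eq_iff h2 (Nat.pos_of_ne_zero (by rintro rfl; exact hkm (dvd_zero k)))
  have e4 : (Finset.range R).filter (fun m => ∃ n, m = n * (k * t) + k * r') =
      ((Finset.range R).filter (fun m => ∃ n, m = n * t + r)).filter (fun m => k ∣ m) := by
    rw [Finset.filter_filter]
    refine Finset.filter_congr fun m _ => ?_
    constructor
    · rintro ⟨n, rfl⟩
      refine ⟨(mod_eq_iff h2 (by positivity)).1 ?_, ⟨n * t + r', by ring⟩⟩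
      rw [show n * (k * t) + k * r' = (n * k) * t + k * r' by ring, Nat.mul_add_mod_self_right]
      exact hrr
    · rintro ⟨⟨n, hn⟩, j, rfl⟩
      have hj : k * j ≡ k * r' [MOD t] := by
        refine Nat.ModEq.trans ?_ hrr.symm
        rw [hn]
        exact Nat.mul_add_mod_self_right n t r
      have hj' : j ≡ r' [MOD t] := Nat.ModEq.cancel_left_of_coprime hcop.symm hj
      have hj0 : 0 < j := Nat.pos_of_ne_zero (by rintro rfl; omega)
      obtain ⟨n', rfl⟩ := (mod_eq_iff h2' hj0).1 hj'
      exact ⟨n', by ring⟩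
  rw [← divSum_eq (show x < R by omega), ← e1, ← e2, divSum, e3, e4, add_comm]
  exact Finset.sum_filter_add_sum_filter_not _ _ _

lemma sum_sub_le_first {u v : ℕ → ℕ} (h : ∀ n, u (n + 1) ≤ v n) (X : ℕ) :
    ∑ n ∈ Finset.range X, u n + u X ≤ ∑ n ∈ Finset.range X, v n + u 0 := by
  induction X with
  | zero => simp
  | succ X ih =>
    rw [Finset.sum_range_succ, Finset.sum_range_succ]
    have := h X
    omega

/-- Uniform bound for the partial sums of `∑ (1 / (n t + k) - 1 / (n t + r))`: with
`u = (k + r - t) / 2` one has `(n t + u) (n t + t + u) ≤ (n t + k) (n t + r)`, so the terms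
with `n ≥ 1` are dominated by a telescoping series. -/
lemma sum_inv_sub_le {t k r : ℝ} (hk : 0 < k) (hkr : k < r) (hrt : r ≤ t) (htk : t < 2 * k)
    (N : ℕ) :
    ∑ n ∈ Finset.range N, (1 / (n * t + k) - 1 / (n * t + r)) ≤
      1 / k - 1 / r + 2 * (r - k) / (t * (t + k + r)) := by
  have ht : 0 < t := by linarith
  have hr : 0 < r := by linarith
  have key : ∀ N : ℕ, ∑ n ∈ Finset.range (N + 1), (1 / (n * t + k) - 1 / (n * t + r)) ≤
      1 / k - 1 / r + (r - k) / t * (2 / (t + k + r) - 2 / (2 * N * t + t + k + r)) := by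
    intro N
    induction N with
    | zero => simp
    | succ N ih =>
      rw [Finset.sum_range_succ]
      have hN : (0 : ℝ) ≤ N := Nat.cast_nonneg N
      have hNt : (0 : ℝ) ≤ N * t := by positivity
      have step : 1 / (((N + 1 : ℕ) : ℝ) * t + k) - 1 / (((N + 1 : ℕ) : ℝ) * t + r) ≤
          (r - k) / t * (2 / (2 * N * t + t + k + r) - 2 / (2 * ((N + 1 : ℕ) : ℝ) * t + t + k + r)) := by
        push_cast
        have e1 : 1 / ((N + 1 : ℝ) * t + k) - 1 / ((N + 1 : ℝ) * t + r) =
            (r - k) * (1 / (((N + 1 : ℝ) * t + k) * ((N + 1 : ℝ) * t + r))) := by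
          field_simp
          ring
        have e2 : (r - k) / t * (2 / (2 * N * t + t + k + r) - 2 / (2 * (N + 1 : ℝ) * t + t + k + r)) =
            (r - k) * (4 / ((2 * N * t + t + k + r) * (2 * (N + 1 : ℝ) * t + t + k + r))) := by
          field_simp
          ring
        rw [e1, e2]
        refine mul_le_mul_of_nonneg_left ?_ (by linarith)
        rw [div_le_div_iff₀ (by positivity) (by positivity)]
        nlinarith [mul_nonneg (by linarith : 0 ≤ t - (r - k)) (by linarith : 0 ≤ t + (r - k))]
      calc _ ≤ _ := add_le_add ih step
        _ = _ := by ring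
  have hnn : (0 : ℝ) ≤ (r - k) / t := div_nonneg (by linarith) ht.le
  have hle : ∀ N : ℕ, (r - k) / t * (2 / (t + k + r) - 2 / (2 * N * t + t + k + r)) ≤
      2 * (r - k) / (t * (t + k + r)) := by
    intro N
    have : (0 : ℝ) ≤ 2 / (2 * N * t + t + k + r) := by positivity
    calc _ ≤ (r - k) / t * (2 / (t + k + r)) := by
          apply mul_le_mul_of_nonneg_left _ hnn
          linarith
      _ = _ := by field_simp
  rcases N with _ | N
  · have a1 : 1 / r ≤ 1 / k := one_div_le_one_div_of_le hk hkr.le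
    have a2 : 0 ≤ 2 * (r - k) / (t * (t + k + r)) :=
      div_nonneg (by linarith) (by positivity)
    simp only [Finset.range_zero, Finset.sum_empty]
    linarith
  · exact (key N).trans (by linarith [hle N])

/-- The numerical heart of the matter: the residue `k` loses to `r > k`. Here `r' = 1` would mean
`r = k` and `r' = 2` would mean `r = 2 k - t < k`; `r' = 3` forces `r = 3 k - t`, and for
`r' ≥ 4` crude bounds suffice. -/
lemma margin_pos {k t r r' : ℕ} (hk1 : t < 2 * k) (hk2 : k < t) (hkr : k < r) (h2 : r ≤ t)
    (h1' : 1 ≤ r') (hrr : k * r' ≡ r [MOD t]) :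
    2 * ((r : ℝ) - k) / (t * (t + k + r)) + 1 / (k * r') < 1 / r := by
  have hk0 : (0 : ℝ) < k := by exact_mod_cast (by omega : 0 < k)
  have hr0 : (0 : ℝ) < r := by exact_mod_cast (by omega : 0 < r)
  have ht0 : (0 : ℝ) < t := by exact_mod_cast (by omega : 0 < t)
  have hk1R : (t : ℝ) < 2 * k := by exact_mod_cast hk1
  have hkrR : (k : ℝ) < r := by exact_mod_cast hkr
  have h2R : (r : ℝ) ≤ t := by exact_mod_cast h2
  have hdvd : (t : ℤ) ∣ (r : ℤ) - k * r' := by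
    have := (Nat.modEq_iff_dvd.1 hrr)
    push_cast at this
    exact this
  obtain ⟨c, hc⟩ := hdvd
  rcases (by omega : r' = 1 ∨ r' = 2 ∨ r' = 3 ∨ 4 ≤ r') with rfl | rfl | rfl | h4
  · exfalso
    push_cast at hc
    have : 0 < c := by nlinarith
    nlinarith
  · exfalso
    push_cast at hc
    rcases (by omega : c ≤ -1 ∨ 0 ≤ c) with h | h <;> nlinarith
  · push_cast at hc
    have hc1 : c = -1 := by
      have a1 : c < 0 := by nlinarith
      have a2 : -2 < c := by nlinarith
      omega
    subst hc1
    have hr3 : (r : ℝ) = 3 * k - t := by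
      have : (r : ℤ) = 3 * k - t := by linarith
      exact_mod_cast this
    have e1 : 2 * ((r : ℝ) - k) / (t * (t + k + r)) = 1 / t - 1 / (2 * k) := by
      have h3 : (t : ℝ) + k + r = 4 * k := by rw [hr3]; ring
      rw [h3, hr3]; field_simp; ring
    have e2 : (1 : ℝ) / t ≤ 1 / r := one_div_le_one_div_of_le hr0 h2R
    have e3 : (1 : ℝ) / (k * (3 : ℕ)) < 1 / (2 * k) := by
      apply one_div_lt_one_div_of_lt (by positivity)
      push_cast; linarith
    linarith
  · have h4R : (4 : ℝ) ≤ r' := by exact_mod_cast h4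
    have e1 : 2 * ((r : ℝ) - k) / (t * (t + k + r)) ≤ 2 / 5 * (1 / t) := by
      rw [div_mul_div_comm, div_le_div_iff₀ (by positivity) (by positivity)]
      have : 2 * ((r : ℝ) - k) * 5 ≤ 2 * (t + k + r) := by linarith
      nlinarith
    have e2 : 1 / ((k : ℝ) * r') ≤ 1 / 2 * (1 / t) := by
      rw [div_mul_div_comm, one_mul]
      apply one_div_le_one_div_of_le (by positivity)
      nlinarith
    have e3 : (1 : ℝ) / t ≤ 1 / r := one_div_le_one_div_of_le hr0 h2R
    have e4 : (0 : ℝ) < 1 / t := by positivity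
    linarith

lemma sub_one_le_natDiv {x a : ℕ} (ha : 0 < a) : (x : ℝ) / a - 1 ≤ ((x / a : ℕ) : ℝ) := by
  have ha' : (0 : ℝ) < a := by exact_mod_cast ha
  have h : (x : ℝ) < (x / a : ℕ) * a + a := by exact_mod_cast Nat.lt_div_mul_add ha
  rw [sub_le_iff_le_add, div_le_iff₀ ha']
  nlinarith

lemma natDiv_le {x a : ℕ} : ((x / a : ℕ) : ℝ) ≤ (x : ℝ) / a := Nat.cast_div_le

/-- The terms of the paired series are bounded individually for `n < N`, and from `N` on the
interlacing `n t + k < n t + r < (n + 1) t + k` makes the series telescope. -/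
lemma sum_floor_sub_le {k t r : ℕ} (hk0 : 0 < k) (hkr : k < r) (h2 : r ≤ t) (N X x : ℕ) :
    (∑ n ∈ Finset.range X, ((x / (n * t + k) : ℕ) : ℝ)) -
      ∑ n ∈ Finset.range X, ((x / (n * t + r) : ℕ) : ℝ) ≤
    x * ∑ n ∈ Finset.range N, (1 / ((n : ℝ) * t + k) - 1 / ((n : ℝ) * t + r)) + N
      + x / (N * t + k) := by
  rw [← Finset.sum_sub_distrib]
  have hnn : ∀ n : ℕ, (0 : ℝ) ≤ ((x / (n * t + k) : ℕ) : ℝ) - ((x / (n * t + r) : ℕ) : ℝ) := by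
    intro n
    rw [sub_nonneg]
    exact_mod_cast Nat.div_le_div_left (by omega) (by omega)
  have h1 : ∑ n ∈ Finset.range X,
        (((x / (n * t + k) : ℕ) : ℝ) - ((x / (n * t + r) : ℕ) : ℝ)) ≤
      ∑ n ∈ Finset.range (N + X),
        (((x / (n * t + k) : ℕ) : ℝ) - ((x / (n * t + r) : ℕ) : ℝ)) :=
    Finset.sum_le_sum_of_subset_of_nonneg (Finset.range_mono (by omega)) fun n _ _ => hnn n
  rw [Finset.sum_range_add] at h1
  have h3 : ∑ n ∈ Finset.range N,
        (((x / (n * t + k) : ℕ) : ℝ) - ((x / (n * t + r) : ℕ) : ℝ)) ≤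
      x * ∑ n ∈ Finset.range N, (1 / ((n : ℝ) * t + k) - 1 / ((n : ℝ) * t + r)) + N := by
    have : (x : ℝ) * ∑ n ∈ Finset.range N, (1 / ((n : ℝ) * t + k) - 1 / ((n : ℝ) * t + r)) + N =
        ∑ n ∈ Finset.range N,
          (x * (1 / ((n : ℝ) * t + k) - 1 / ((n : ℝ) * t + r)) + 1) := by
      rw [Finset.sum_add_distrib, ← Finset.mul_sum]
      simp
    rw [this]
    refine Finset.sum_le_sum fun n _ => ?_
    have a1 := natDiv_le (x := x) (a := n * t + k)
    have a2 := sub_one_le_natDiv (x := x) (a := n * t + r) (by omega)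
    push_cast at a1 a2 ⊢
    rw [mul_sub, mul_one_div, mul_one_div]
    linarith
  have h4 : ∑ n ∈ Finset.range X, (((x / ((N + n) * t + k) : ℕ) : ℝ) -
      ((x / ((N + n) * t + r) : ℕ) : ℝ)) ≤ x / (N * t + k) := by
    have h5 := sum_sub_le_first (u := fun n => x / ((N + n) * t + k))
      (v := fun n => x / ((N + n) * t + r)) (fun n => Nat.div_le_div_left (by nlinarith) (by omega)) X
    have h6 := natDiv_le (x := x) (a := N * t + k)
    have h7 : (∑ n ∈ Finset.range X, ((x / ((N + n) * t + k) : ℕ) : ℝ)) ≤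
        ∑ n ∈ Finset.range X, ((x / ((N + n) * t + r) : ℕ) : ℝ) + ((x / (N * t + k) : ℕ) : ℝ) := by
      have : ∑ n ∈ Finset.range X, x / ((N + n) * t + k) ≤
        ∑ n ∈ Finset.range X, x / ((N + n) * t + r) + x / (N * t + k) := by
        exact (Nat.le_add_right _ _).trans h5
      exact_mod_cast this
    rw [Finset.sum_sub_distrib]
    push_cast at h6 h7 ⊢
    linarith
  linarith

/-- The summatory functions of the two residue classes differ by at least a positive multiple
of `x`, up to a constant. -/
lemma divSum_gap {k t r : ℕ} (hk1 : t < 2 * k) (hk2 : k < t) (hcop : Nat.Coprime k t)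
    (h1 : 1 ≤ r) (h2 : r ≤ t) (hr : r ≠ k) :
    ∃ δ : ℝ, 0 < δ ∧ ∃ M : ℝ, ∀ x : ℕ,
      δ * x - M ≤ (divSum k t r (x + 1) x : ℝ) - divSum k t k (x + 1) x := by
  have hk0 : 0 < k := by omega
  obtain ⟨r', h1', h2', hrr⟩ : ∃ r', 1 ≤ r' ∧ r' ≤ t ∧ k * r' ≡ r [MOD t] := by
    obtain ⟨m, hm⟩ := Nat.exists_mul_mod_eq_one_of_coprime hcop (by omega)
    have hmod : k * (m * r) ≡ r [MOD t] := by
      have h : k * m ≡ 1 [MOD t] := by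
        rw [Nat.ModEq, hm.2, Nat.mod_eq_of_lt (by omega)]
      have := h.mul_right r
      rwa [one_mul, mul_assoc] at this
    rcases Nat.eq_zero_or_pos (m * r % t) with h0 | h0
    · refine ⟨t, by omega, le_rfl, Nat.ModEq.trans ?_ hmod⟩
      refine Nat.ModEq.mul_left k ?_
      rw [Nat.ModEq, Nat.mod_self, h0]
    · exact ⟨m * r % t, h0, (Nat.mod_lt _ (by omega)).le,
        Nat.ModEq.trans (Nat.ModEq.mul_left k (Nat.mod_modEq _ _)) hmod⟩
  have Er := fun x => divSum_add (x := x) hk0 hcop h1 h2 h1' h2' hrr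
  have Ek := fun x => divSum_add (x := x) (r' := 1) hk0 hcop hk0 hk2.le le_rfl (by omega)
    (by rw [mul_one])
  have Er' : ∀ x : ℕ, (divSum k t r (x + 1) x : ℝ) +
      ∑ n ∈ Finset.range (x + 1), ((x / (k * (n * t + r')) : ℕ) : ℝ) =
      ∑ n ∈ Finset.range (x + 1), ((x / (n * t + r) : ℕ) : ℝ) := fun x => by
    exact_mod_cast Er x
  have Ek' : ∀ x : ℕ, (divSum k t k (x + 1) x : ℝ) +
      ∑ n ∈ Finset.range (x + 1), ((x / (k * (n * t + 1)) : ℕ) : ℝ) =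
      ∑ n ∈ Finset.range (x + 1), ((x / (n * t + k) : ℕ) : ℝ) := fun x => by
    exact_mod_cast Ek x
  have nn : ∀ x n : ℕ, ((x / (k * (n * t + r')) : ℕ) : ℝ) ≤ ((x / (k * (n * t + 1)) : ℕ) : ℝ) := by
    intro x n
    have : x / (k * (n * t + r')) ≤ x / (k * (n * t + 1)) :=
      Nat.div_le_div_left (Nat.mul_le_mul_left k (by omega)) (by positivity)
    exact_mod_cast this
  have hk0R : (0 : ℝ) < k := by exact_mod_cast hk0
  have hr0R : (0 : ℝ) < r := by exact_mod_cast h1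
  rcases lt_or_gt_of_ne hr with hlt | hgt
  · refine ⟨1 / r - 1 / k, ?_, 1, fun x => ?_⟩
    · rw [sub_pos]
      exact one_div_lt_one_div_of_lt hr0R (by exact_mod_cast hlt)
    · have b1 : ∑ n ∈ Finset.range (x + 1), ((x / (k * (n * t + r')) : ℕ) : ℝ) ≤
          ∑ n ∈ Finset.range (x + 1), ((x / (k * (n * t + 1)) : ℕ) : ℝ) :=
        Finset.sum_le_sum fun n _ => nn x n
      have b2 : ((x / (0 * t + r) : ℕ) : ℝ) - ((x / (0 * t + k) : ℕ) : ℝ) ≤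
          ∑ n ∈ Finset.range (x + 1),
            (((x / (n * t + r) : ℕ) : ℝ) - ((x / (n * t + k) : ℕ) : ℝ)) := by
        refine Finset.single_le_sum
          (f := fun n => ((x / (n * t + r) : ℕ) : ℝ) - ((x / (n * t + k) : ℕ) : ℝ)) ?_ (by simp)
        intro n _
        rw [sub_nonneg]
        exact_mod_cast Nat.div_le_div_left (by omega) (by omega)
      rw [Finset.sum_sub_distrib, zero_mul, zero_add, zero_add] at b2
      have b3 := sub_one_le_natDiv (x := x) (a := r) h1
      have b4 := natDiv_le (x := x) (a := k)
      have := Er' x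
      have := Ek' x
      rw [sub_mul, one_div_mul_eq_div, one_div_mul_eq_div]
      linarith
  · have hm := margin_pos hk1 hk2 hgt h2 h1' hrr
    set δ : ℝ := 1 / r - (2 * ((r : ℝ) - k) / (t * (t + k + r)) + 1 / (k * r')) with hδ
    have hδ0 : 0 < δ := by rw [hδ]; linarith
    obtain ⟨N, hN⟩ := exists_nat_gt (2 / δ)
    have hN' : 1 / ((N : ℝ) * t + k) ≤ δ / 2 := by
      have ht1 : (1 : ℝ) ≤ t := by exact_mod_cast (by omega : 1 ≤ t)
      have hN0 : (0 : ℝ) ≤ N := Nat.cast_nonneg N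
      rw [div_lt_iff₀ hδ0] at hN
      rw [div_le_div_iff₀ (by positivity) (by norm_num)]
      have : (N : ℝ) ≤ N * t + k := by nlinarith
      nlinarith
    refine ⟨δ / 2, by linarith, N + 1, fun x => ?_⟩
    have b1 : ((x / (k * (0 * t + 1)) : ℕ) : ℝ) - ((x / (k * (0 * t + r')) : ℕ) : ℝ) ≤
        ∑ n ∈ Finset.range (x + 1),
          (((x / (k * (n * t + 1)) : ℕ) : ℝ) - ((x / (k * (n * t + r')) : ℕ) : ℝ)) :=
      Finset.single_le_sum
        (f := fun n => ((x / (k * (n * t + 1)) : ℕ) : ℝ) - ((x / (k * (n * t + r')) : ℕ) : ℝ))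
        (fun n _ => sub_nonneg.2 (nn x n)) (by simp)
    rw [Finset.sum_sub_distrib, zero_mul, zero_add, zero_add, mul_one] at b1
    have b2 := sum_floor_sub_le hk0 hgt h2 N (x + 1) x
    have b3 := sub_one_le_natDiv (x := x) (a := k) hk0
    have b4 := natDiv_le (x := x) (a := k * r')
    have b5 := sum_inv_sub_le hk0R (show (k : ℝ) < r by exact_mod_cast hgt)
      (show (r : ℝ) ≤ t by exact_mod_cast h2) (show (t : ℝ) < 2 * k by exact_mod_cast hk1) N
    have hx : (0 : ℝ) ≤ x := Nat.cast_nonneg x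
    have b6 := mul_le_mul_of_nonneg_left b5 hx
    have b7 := mul_le_mul_of_nonneg_left hN' hx
    have := Er' x
    have := Ek' x
    have b8 : (x : ℝ) * δ = x / r - (x * (2 * ((r : ℝ) - k) / (t * (t + k + r))) + x / (k * r')) := by
      rw [hδ]; ring
    have b9 : (x : ℝ) * (1 / k - 1 / r + 2 * ((r : ℝ) - k) / (t * (t + k + r))) =
      x / k - x / r + x * (2 * ((r : ℝ) - k) / (t * (t + k + r))) := by ring
    rw [mul_one_div] at b7
    push_cast at b4
    linarith

theorem stmt6 (k t : ℕ) (ht : 2 < t) (hk1 : (t : ℝ)/2 < (k : ℝ)) (hk2 : k < t)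
    (hcop : Nat.Coprime k t) :
    ∀ r : ℕ, 1 ≤ r → r ≤ t → r ≠ k →
      ∃ N : ℕ, ∀ n ≥ N, Dkx k t r n > Dkx k t k n := by
  intro r h1 h2 hr
  have hk1' : t < 2 * k := by
    have : (t : ℝ) < 2 * k := by linarith
    exact_mod_cast this
  have hk : 2 ≤ k := by omega
  obtain ⟨δ, hδ, M, hM⟩ := divSum_gap hk1' hk2 hcop h1 h2 hr
  obtain ⟨d, hd⟩ := exists_nat_gt (2 * |M| / δ)
  obtain ⟨N, hN⟩ := mul_numIndiv_le hk d
  refine ⟨N, fun n hn => ?_⟩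
  obtain ⟨hpos, hle⟩ := hN n hn
  have hposR : (0 : ℝ) < ((∑ j ∈ Finset.range n, numIndiv k j : ℕ) : ℝ) := by exact_mod_cast hpos
  have hleR : (d : ℝ) * numIndiv k n ≤ 2 * ((∑ j ∈ Finset.range n, numIndiv k j : ℕ) : ℝ) := by
    exact_mod_cast hle
  have hdiff : δ * ((∑ j ∈ Finset.range n, numIndiv k j : ℕ) : ℝ) - M * numIndiv k n ≤
      (Dkx k t r n : ℝ) - Dkx k t k n := by
    rw [Dkx_eq hk, Dkx_eq hk, ← sum_incr_mul_sub hk, ← sum_incr hk n]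
    push_cast
    rw [Finset.mul_sum, Finset.mul_sum, ← Finset.sum_sub_distrib, ← Finset.sum_sub_distrib]
    refine Finset.sum_le_sum fun l _ => ?_
    have := mul_le_mul_of_nonneg_left (hM (n - l)) (Nat.cast_nonneg (α := ℝ) (incr k l))
    linarith
  have hP : (0 : ℝ) ≤ numIndiv k n := Nat.cast_nonneg _
  have hMP : M * numIndiv k n < δ * ((∑ j ∈ Finset.range n, numIndiv k j : ℕ) : ℝ) := by
    rw [div_lt_iff₀ hδ] at hd
    rcases hP.eq_or_lt with h0 | h0
    · rw [← h0, mul_zero]; positivity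
    · have a1 : 2 * |M| * numIndiv k n < d * δ * numIndiv k n := mul_lt_mul_of_pos_right hd h0
      have a2 := mul_le_mul_of_nonneg_left hleR hδ.le
      have a3 := mul_le_mul_of_nonneg_right (le_abs_self M) hP
      linarith
  have : (Dkx k t k n : ℝ) < Dkx k t r n := by linarith
  exact_mod_cast this
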